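/- arXiv:2109.14803 — 4 statements merged into one kernel-verified Lean document; each statement's English description precedes it below -/
import Mathlib

section
/- Fix c ∈ (0,1) and ξ ∈ (0,1), and set a := √(1 − c²cos²ξ)/(c·sin ξ) and ρ := arccos(c·cos ξ)/a. Let ψ : ℝ → ℝ be a smooth function with ψ(x) = 0 for all x ≤ 0, ψ(x) = 1 for all x ≥ 1, and 0 ≤ ψ ≤ 1. Let ζ > 0 and 0 < κ < π/2 − ξ, and define l : ℝ → ℝ by l(t) := −[(1 − ψ((t−ρ)/ζ))·a·sin(a t) + ψ((t−ρ)/ζ)·c·sin(t − ρ − ζ + ξ)]. Define φ on [0, ρ+ζ+π/2−ξ] by: φ(r) = sin(a r)/a for r ∈ [0, ρ]; φ(r) = sin(aρ)/a + (r−ρ)cos(aρ) + ∫_ρ^r ∫_ρ^s l(t) dt ds for r ∈ [ρ, ρ+ζ]; φ(r) = c·sin ξ + c(r−ρ−ζ)cos ξ + (1 − ψ((r−ρ−ζ)/κ))·∫_ρ^r ∫_ρ^s l(t) dt ds + ψ((r−ρ−ζ)/κ)·∫_{ρ+ζ}^r ∫_{ρ+ζ}^s l(t) dt ds + (1 − ψ((r−ρ−ζ)/κ))·cζ·cos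 ξ for r ∈ [ρ+ζ, ρ+ζ+κ]; and φ(r) = c·sin(r−ρ−ζ+ξ) for r ∈ [ρ+ζ+κ, ρ+ζ+π/2−ξ]. Then φ is well defined (the adjacent formulas agree at r = ρ, ρ+ζ and ρ+ζ+κ) and φ is infinitely differentiable on the open interval (0, ρ+ζ+π/2−ξ). -/
open Real MeasureTheory intervalIntegral

lemma prim_smooth (f : ℝ → ℝ) (hf : ContDiff ℝ (⊤ : ℕ∞) f) (b : ℝ) :
    ContDiff ℝ (⊤ : ℕ∞) (fun r => ∫ t in b..r, f t) := by
  have hd : ∀ x, HasDerivAt (fun r => ∫ t in b..r, f t) (f x) x := fun x =>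
    hf.continuous.integral_hasStrictDerivAt b x |>.hasDerivAt
  rw [contDiff_infty_iff_deriv]
  refine ⟨fun x => (hd x).differentiableAt, ?_⟩
  have : deriv (fun r => ∫ t in b..r, f t) = f := funext fun x => (hd x).deriv
  rw [this]; exact hf

/-- If `l = F''` on the segment from `b` to `r`, the double integral is the Taylor remainder. -/
lemma dbl_int (l F F' : ℝ → ℝ) (hl : Continuous l) (b r : ℝ)
    (h1 : ∀ x, HasDerivAt F (F' x) x) (h2 : ∀ x ∈ Set.uIcc b r, HasDerivAt F' (l x) x)
    (hF' : Continuous F') :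
    (∫ s in b..r, (∫ t in b..s, l t)) = F r - F b - (r - b) * F' b := by
  have e : ∀ s ∈ Set.uIcc b r, (∫ t in b..s, l t) = F' s - F' b := fun s hs =>
    integral_eq_sub_of_hasDerivAt
      (fun x hx => h2 x (Set.uIcc_subset_uIcc_left hs hx)) (hl.intervalIntegrable _ _)
  rw [integral_congr e, integral_sub (hF'.intervalIntegrable _ _) (by simp),
    integral_eq_sub_of_hasDerivAt (fun x _ => h1 x) (hF'.intervalIntegrable _ _)]
  simp

/-- Smoothness of the glued warping function `φ = φ_{ξ,ζ,κ}`: the adjacent defining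
formulas agree at the junction points `ρ`, `ρ+ζ`, `ρ+ζ+κ`, and the resulting
piecewise function is infinitely differentiable on `(0, ρ+ζ+π/2−ξ)`. -/
theorem stmt6 (c ξ : ℝ) (hc : c ∈ Set.Ioo (0 : ℝ) 1) (hξ : ξ ∈ Set.Ioo (0 : ℝ) 1)
    (a ρ : ℝ)
    (ha : a = Real.sqrt (1 - c ^ 2 * Real.cos ξ ^ 2) / (c * Real.sin ξ))
    (hρ : ρ = Real.arccos (c * Real.cos ξ) / a)
    (ψ : ℝ → ℝ) (hψ : ContDiff ℝ (⊤ : ℕ∞) ψ)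
    (hψ0 : ∀ x : ℝ, x ≤ 0 → ψ x = 0)
    (hψ1 : ∀ x : ℝ, 1 ≤ x → ψ x = 1)
    (hψb : ∀ x : ℝ, ψ x ∈ Set.Icc (0 : ℝ) 1)
    (ζ κ : ℝ) (hζ : 0 < ζ) (hκ : 0 < κ) (hκ' : κ < Real.pi / 2 - ξ)
    (l : ℝ → ℝ)
    (hl : ∀ t : ℝ, l t =
      -((1 - ψ ((t - ρ) / ζ)) * a * Real.sin (a * t)
        + ψ ((t - ρ) / ζ) * c * Real.sin (t - ρ - ζ + ξ)))
    (φ₁ φ₂ φ₃ φ₄ : ℝ → ℝ)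
    (hφ₁ : ∀ r : ℝ, φ₁ r = Real.sin (a * r) / a)
    (hφ₂ : ∀ r : ℝ, φ₂ r =
      Real.sin (a * ρ) / a + (r - ρ) * Real.cos (a * ρ)
        + ∫ s in ρ..r, (∫ t in ρ..s, l t))
    (hφ₃ : ∀ r : ℝ, φ₃ r =
      c * Real.sin ξ + c * (r - ρ - ζ) * Real.cos ξ
        + (1 - ψ ((r - (ρ + ζ)) / κ)) * (∫ s in ρ..r, (∫ t in ρ..s, l t))
        + ψ ((r - (ρ + ζ)) / κ) * (∫ s in (ρ + ζ)..r, (∫ t in (ρ + ζ)..s, l t))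
        + (1 - ψ ((r - (ρ + ζ)) / κ)) * (c * ζ * Real.cos ξ))
    (hφ₄ : ∀ r : ℝ, φ₄ r = c * Real.sin (r - ρ - ζ + ξ))
    (φ : ℝ → ℝ)
    (hφ : ∀ r : ℝ, φ r =
      if r ≤ ρ then φ₁ r
      else if r ≤ ρ + ζ then φ₂ r
      else if r ≤ ρ + ζ + κ then φ₃ r
      else φ₄ r) :
    φ₁ ρ = φ₂ ρ ∧
    φ₂ (ρ + ζ) = φ₃ (ρ + ζ) ∧
    φ₃ (ρ + ζ + κ) = φ₄ (ρ + ζ + κ) ∧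
    ContDiffOn ℝ (⊤ : ℕ∞) φ (Set.Ioo 0 (ρ + ζ + Real.pi / 2 - ξ)) := by
  obtain ⟨hc0, hc1⟩ := hc
  obtain ⟨hx0, hx1⟩ := hξ
  have hsin : 0 < Real.sin ξ := Real.sin_pos_of_pos_of_lt_pi hx0 (by linarith [Real.pi_gt_three])
  have hcs : c ^ 2 * Real.cos ξ ^ 2 < 1 := by
    have := Real.sin_sq_add_cos_sq ξ
    have h3 : c ^ 2 < 1 := by nlinarith
    nlinarith [sq_nonneg (Real.cos ξ), mul_pos hsin hsin]
  have hq : 0 < Real.sqrt (1 - c ^ 2 * Real.cos ξ ^ 2) := Real.sqrt_pos.2 (by linarith)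
  have ha0 : 0 < a := by rw [ha]; positivity
  have haρ : a * ρ = Real.arccos (c * Real.cos ξ) := by rw [hρ]; field_simp
  have habs : |c * Real.cos ξ| ≤ 1 := by
    rw [← sq_le_one_iff_abs_le_one, mul_pow]; exact hcs.le
  have hcos : Real.cos (a * ρ) = c * Real.cos ξ := by
    rw [haρ, Real.cos_arccos (abs_le.1 habs).1 (abs_le.1 habs).2]
  have hsa : Real.sin (a * ρ) / a = c * Real.sin ξ := by
    rw [haρ, Real.sin_arccos, mul_pow, ha]; field_simp
  have hlf : l = fun t => -((1 - ψ ((t - ρ) / ζ)) * a * Real.sin (a * t)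
        + ψ ((t - ρ) / ζ) * c * Real.sin (t - ρ - ζ + ξ)) := funext hl
  have hls : ContDiff ℝ (⊤ : ℕ∞) l := by
    rw [hlf]
    have : ContDiff ℝ (⊤ : ℕ∞) (fun t => ψ ((t - ρ) / ζ)) := hψ.comp (by fun_prop)
    fun_prop
  have e12 : ∀ r, r ≤ ρ → φ₁ r = φ₂ r := by
    intro r hr
    rw [hφ₁, hφ₂, dbl_int l (fun r => Real.sin (a * r) / a) (fun r => Real.cos (a * r))
      hls.continuous ρ r ?_ ?_ (by fun_prop)]
    · ring
    · intro x
      have := ((Real.hasDerivAt_sin (a * x)).comp x ((hasDerivAt_id x).const_mul a)).div_const a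
      refine HasDerivAt.congr_deriv this ?_
      field_simp
    · intro x hx
      rw [Set.uIcc_of_ge hr] at hx
      have := ((Real.hasDerivAt_cos (a * x)).comp x ((hasDerivAt_id x).const_mul a))
      refine HasDerivAt.congr_deriv this ?_
      rw [hl, hψ0 _ (div_nonpos_of_nonpos_of_nonneg (by linarith [hx.2]) hζ.le)]
      ring
  have e23 : ∀ r, r ≤ ρ + ζ → φ₂ r = φ₃ r := by
    intro r hr
    rw [hφ₂, hφ₃, hψ0 _ (div_nonpos_of_nonpos_of_nonneg (by linarith) hκ.le), hsa, hcos]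
    ring
  have e34 : ∀ r, ρ + ζ + κ ≤ r → φ₃ r = φ₄ r := by
    intro r hr
    rw [hφ₃, hφ₄, hψ1 _ ((one_le_div hκ).2 (by linarith)),
      dbl_int l (fun r => c * Real.sin (r - ρ - ζ + ξ)) (fun r => c * Real.cos (r - ρ - ζ + ξ))
      hls.continuous (ρ + ζ) r ?_ ?_ (by fun_prop)]
    · have : ρ + ζ - ρ - ζ + ξ = ξ := by ring
      simp only [this]
      ring
    · intro x
      have := ((Real.hasDerivAt_sin (x - ρ - ζ + ξ)).comp x
        ((((hasDerivAt_id x).sub_const ρ).sub_const ζ).add_const ξ)).const_mul c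
      refine HasDerivAt.congr_deriv this ?_
      ring
    · intro x hx
      rw [Set.uIcc_of_le (by linarith)] at hx
      have := ((Real.hasDerivAt_cos (x - ρ - ζ + ξ)).comp x
        ((((hasDerivAt_id x).sub_const ρ).sub_const ζ).add_const ξ)).const_mul c
      refine HasDerivAt.congr_deriv this ?_
      rw [hl, hψ1 _ ((one_le_div hζ).2 (by linarith [hx.1]))]
      ring
  refine ⟨e12 _ le_rfl, e23 _ le_rfl, e34 _ le_rfl, ?_⟩
  have hφ3 : φ = φ₃ := by
    funext r
    rw [hφ]
    split_ifs with h1 h2 h3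
    · rw [e12 r h1, e23 r (by linarith)]
    · exact e23 r h2
    · rfl
    · exact (e34 r (by linarith)).symm
  rw [hφ3, funext hφ₃]
  apply ContDiff.contDiffOn
  have i1 := prim_smooth _ (prim_smooth l hls ρ) ρ
  have i2 := prim_smooth _ (prim_smooth l hls (ρ + ζ)) (ρ + ζ)
  have i3 : ContDiff ℝ (⊤ : ℕ∞) (fun r => ψ ((r - (ρ + ζ)) / κ)) := hψ.comp (by fun_prop)
  fun_prop
end

section
/- Fix c ∈ (0,1) and ξ ∈ (0,1), and set a := √(1 − c²cos²ξ)/(c·sin ξ) and ρ := arccos(c·cos ξ)/a. Let ψ : ℝ → ℝ be a smooth function with ψ(x) = 0 for all x ≤ 0, ψ(x) = 1 for all x ≥ 1, and 0 ≤ ψ ≤ 1. For ζ > 0 and 0 < κ < π/2 − ξ define l and the glued warping function φ = φ_{ξ,ζ,κ} on [0, ρ+ζ+π/2−ξ] by: l(t) := −[(1 − ψ((t−ρ)/ζ))·a·sin(a t) + ψ((t−ρ)/ζ)·c·sin(t − ρ − ζ + ξ)]; φ(r) = sin(a r)/a for r ∈ [0, ρ]; φ(r) = sin(aρ)/a + (r−ρ)cos(aρ)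 + ∫_ρ^r ∫_ρ^s l(t) dt ds for r ∈ [ρ, ρ+ζ]; φ(r) = c·sin ξ + c(r−ρ−ζ)cos ξ + (1 − ψ((r−ρ−ζ)/κ))·∫_ρ^r ∫_ρ^s l(t) dt ds + ψ((r−ρ−ζ)/κ)·∫_{ρ+ζ}^r ∫_{ρ+ζ}^s l(t) dt ds + (1 − ψ((r−ρ−ζ)/κ))·cζ·cos ξ for r ∈ [ρ+ζ, ρ+ζ+κ]; φ(r) = c·sin(r−ρ−ζ+ξ) for r ∈ [ρ+ζ+κ, ρ+ζ+π/2−ξ]. Then there exists κ₀ ∈ (0, π/2 − ξ) such that for every κ ∈ (0, κ₀) there exists ζ₀ > 0 such that for every ζ ∈ (0, ζ₀) and every r ∈ (0, ρ+ζ+π/2−ξ): φ''(r) ≤ −(1−ξ)·φ(r) and (φ'(r))² + (1−ξ)·φ(r)² ≤ 1. -/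
open Real MeasureTheory intervalIntegral

lemma aux_int (l g G : ℝ → ℝ) (b r : ℝ)
    (hG : ∀ x, HasDerivAt G (g x) x)
    (h : ℝ → ℝ) (hg : ∀ x, HasDerivAt g (h x) x) (hh : Continuous h)
    (hlh : ∀ t ∈ Set.uIcc b r, l t = h t) :
    (∫ t in b..r, l t) = g r - g b ∧
    (∫ s in b..r, (∫ t in b..s, l t)) = G r - G b - (r - b) * g b := by
  have h1 : ∀ s ∈ Set.uIcc b r, (∫ t in b..s, l t) = g s - g b := by
    intro s hs
    rw [integral_congr (g := h)]
    · exact integral_eq_sub_of_hasDerivAt (fun x _ => hg x) (hh.intervalIntegrable _ _)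
    · intro t ht
      exact hlh t (Set.uIcc_subset_uIcc_left hs ht)
  refine ⟨h1 r Set.right_mem_uIcc, ?_⟩
  rw [integral_congr (g := fun s => g s - g b) (fun s hs => h1 s hs)]
  have hgc : Continuous g := continuous_iff_continuousAt.2 fun x => (hg x).continuousAt
  rw [intervalIntegral.integral_sub (hgc.intervalIntegrable _ _) (by simp),
    integral_eq_sub_of_hasDerivAt (fun x _ => hG x) (hgc.intervalIntegrable _ _)]
  simp

lemma aux_deriv (l : ℝ → ℝ) (hl : Continuous l) (b : ℝ) :
    Continuous (fun s => ∫ t in b..s, l t) ∧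
    (∀ r, HasDerivAt (fun s => ∫ t in b..s, l t) (l r) r) ∧
    (∀ r, HasDerivAt (fun r => ∫ s in b..r, (∫ t in b..s, l t)) (∫ t in b..r, l t) r) := by
  have h1 : ∀ r, HasDerivAt (fun s => ∫ t in b..s, l t) (l r) r := fun r =>
    hl.integral_hasStrictDerivAt b r |>.hasDerivAt
  have hc : Continuous (fun s => ∫ t in b..s, l t) :=
    continuous_iff_continuousAt.2 fun x => (h1 x).continuousAt
  exact ⟨hc, h1, fun r => (hc.integral_hasStrictDerivAt b r).hasDerivAt⟩

lemma aux_D (l : ℝ → ℝ) (hl : Continuous l) (b d r : ℝ) :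
    (∫ t in b..r, l t) = (∫ t in b..d, l t) + (∫ t in d..r, l t) ∧
    (∫ s in b..r, (∫ t in b..s, l t)) = (∫ s in b..d, (∫ t in b..s, l t))
      + (r - d) * (∫ t in b..d, l t) + ∫ s in d..r, (∫ t in d..s, l t) := by
  have h0 : ∀ r, (∫ t in b..r, l t) = (∫ t in b..d, l t) + (∫ t in d..r, l t) := fun r =>
    (integral_add_adjacent_intervals (hl.intervalIntegrable _ _) (hl.intervalIntegrable _ _)).symm
  have hb := (aux_deriv l hl b).1
  have hd := (aux_deriv l hl d).1
  refine ⟨h0 r, ?_⟩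
  rw [← integral_add_adjacent_intervals (a := b) (b := d) (c := r)
    (hb.intervalIntegrable _ _) (hb.intervalIntegrable _ _)]
  have : (∫ s in d..r, (∫ t in b..s, l t))
      = ∫ s in d..r, ((∫ t in b..d, l t) + (∫ t in d..s, l t)) :=
    integral_congr fun s _ => h0 s
  rw [this, intervalIntegral.integral_add (by simp) (hd.intervalIntegrable _ _)]
  simp [add_assoc]

lemma aux_bd (g : ℝ → ℝ) (hg : Continuous (deriv g)) (u v : ℝ)
    (h0 : ∀ x < 0, g x = u) (h1 : ∀ x > 1, g x = v) :
    (∀ x < 0, deriv g x = 0) ∧ (∀ x > 1, deriv g x = 0) ∧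
    ∃ B, 0 ≤ B ∧ ∀ x, |deriv g x| ≤ B := by
  have a0 : ∀ x < 0, deriv g x = 0 := by
    intro x hx
    have : g =ᶠ[nhds x] fun _ => u := by
      filter_upwards [Iio_mem_nhds hx] with y hy using h0 y hy
    rw [this.deriv_eq]; simp
  have a1 : ∀ x > 1, deriv g x = 0 := by
    intro x hx
    have : g =ᶠ[nhds x] fun _ => v := by
      filter_upwards [Ioi_mem_nhds hx] with y hy using h1 y hy
    rw [this.deriv_eq]; simp
  refine ⟨a0, a1, ?_⟩
  obtain ⟨B, hB⟩ := (isCompact_Icc (a := (0:ℝ)) (b := 1)).exists_bound_of_continuousOn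
    hg.continuousOn
  have hB0 : 0 ≤ B := (norm_nonneg _).trans (hB 0 (by simp))
  refine ⟨B, hB0, fun x => ?_⟩
  rcases lt_or_ge x 0 with hx | hx
  · rw [a0 x hx]; simpa
  rcases lt_or_ge 1 x with hx1 | hx1
  · rw [a1 x hx1]; simpa
  exact hB x ⟨hx, hx1⟩

lemma aux_final (c ξ u δ f f1 f2 : ℝ) (hc : c ∈ Set.Ioo (0 : ℝ) 1) (hξ : ξ ∈ Set.Ioo (0 : ℝ) 1)
    (hu : sin ξ ≤ sin u) (hδ0 : 0 ≤ δ) (hδ1 : δ ≤ 1) (hδ2 : δ ≤ ξ * (c * sin ξ) / 2)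
    (hδ3 : δ ≤ (1 - c ^ 2) / 6)
    (h0 : |f - c * sin u| ≤ δ) (h1 : |f1 - c * cos u| ≤ δ) (h2 : f2 ≤ - (c * sin u) + δ) :
    f2 ≤ -(1 - ξ) * f ∧ f1 ^ 2 + (1 - ξ) * f ^ 2 ≤ 1 := by
  obtain ⟨hc0, hc1⟩ := hc
  obtain ⟨hx0, hx1⟩ := hξ
  obtain ⟨h0a, h0b⟩ := abs_le.1 h0
  obtain ⟨h1a, h1b⟩ := abs_le.1 h1
  constructor
  · have e1 : ξ * (c * sin ξ) ≤ ξ * (c * sin u) := by gcongr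
    have e2 : (1 - ξ) * f ≤ (1 - ξ) * (c * sin u + δ) :=
      mul_le_mul_of_nonneg_left (by linarith) (by linarith)
    nlinarith [mul_nonneg hx0.le hδ0]
  · have hs : (c * cos u) ^ 2 + (c * sin u) ^ 2 = c ^ 2 := by
      have := sin_sq_add_cos_sq u
      linear_combination c ^ 2 * this
    have key : ∀ x y : ℝ, |y| ≤ 1 → |x - y| ≤ δ → x ^ 2 ≤ y ^ 2 + 3 * δ := by
      intro x y hy hxy
      have : x ^ 2 = y ^ 2 + (x - y) * (2 * y) + (x - y) ^ 2 := by ring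
      have e1 : (x - y) * (2 * y) ≤ δ * 2 := by
        calc (x - y) * (2 * y) ≤ |(x - y) * (2 * y)| := le_abs_self _
          _ = |x - y| * (2 * |y|) := by rw [abs_mul, abs_mul]; norm_num
          _ ≤ δ * (2 * 1) := by gcongr
          _ = _ := by ring
      have e2 : (x - y) ^ 2 ≤ δ := by
        rw [← sq_abs]; nlinarith [abs_nonneg (x - y)]
      linarith
    have k1 := key f1 (c * cos u) (by
      rw [abs_mul, abs_of_pos hc0]; nlinarith [abs_cos_le_one u, abs_nonneg (cos u)]) h1
    have k2 := key f (c * sin u) (by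
      rw [abs_mul, abs_of_pos hc0]; nlinarith [abs_sin_le_one u, abs_nonneg (sin u)]) h0
    nlinarith [mul_nonneg hx0.le (sq_nonneg f)]

lemma aux_h1 (a : ℝ) (ha : a ≠ 0) (x : ℝ) :
    HasDerivAt (fun x => sin (a * x) / a) (cos (a * x)) x := by
  have := (((hasDerivAt_id' x).const_mul a).sin).div_const a
  refine this.congr_deriv ?_
  field_simp

lemma aux_h2 (a : ℝ) (x : ℝ) :
    HasDerivAt (fun x => cos (a * x)) (-(a * sin (a * x))) x := by
  have := (((hasDerivAt_id' x).const_mul a).cos)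
  refine this.congr_deriv ?_
  ring

lemma aux_h3 (c ρ ζ ξ x : ℝ) :
    HasDerivAt (fun x => c * sin (x - ρ - ζ + ξ)) (c * cos (x - ρ - ζ + ξ)) x := by
  have := (((((hasDerivAt_id' x).sub_const ρ).sub_const ζ).add_const ξ).sin).const_mul c
  refine this.congr_deriv ?_
  ring

lemma aux_h4 (c ρ ζ ξ x : ℝ) :
    HasDerivAt (fun x => c * cos (x - ρ - ζ + ξ)) (-(c * sin (x - ρ - ζ + ξ))) x := by
  have := (((((hasDerivAt_id' x).sub_const ρ).sub_const ζ).add_const ξ).cos).const_mul c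
  refine this.congr_deriv ?_
  ring

set_option maxHeartbeats 4000000 in
/-- The Claim in Proposition 5.1: for each fixed `ξ` and all sufficiently small `κ`
and `ζ ≪ κ`, the glued warping function `φ = φ_{ξ,ζ,κ}` satisfies
`φ'' ≤ −(1−ξ)φ` and `(φ')² + (1−ξ)φ² ≤ 1` on `(0, ρ+ζ+π/2−ξ)`. -/
theorem stmt7 (c ξ : ℝ) (hc : c ∈ Set.Ioo (0 : ℝ) 1) (hξ : ξ ∈ Set.Ioo (0 : ℝ) 1)
    (a ρ : ℝ)
    (ha : a = Real.sqrt (1 - c ^ 2 * Real.cos ξ ^ 2) / (c * Real.sin ξ))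
    (hρ : ρ = Real.arccos (c * Real.cos ξ) / a)
    (ψ : ℝ → ℝ) (hψ : ContDiff ℝ (⊤ : ℕ∞) ψ)
    (hψ0 : ∀ x : ℝ, x ≤ 0 → ψ x = 0)
    (hψ1 : ∀ x : ℝ, 1 ≤ x → ψ x = 1)
    (hψb : ∀ x : ℝ, ψ x ∈ Set.Icc (0 : ℝ) 1)
    (l : ℝ → ℝ → ℝ)
    (hl : ∀ ζ t : ℝ, l ζ t =
      -((1 - ψ ((t - ρ) / ζ)) * a * Real.sin (a * t)
        + ψ ((t - ρ) / ζ) * c * Real.sin (t - ρ - ζ + ξ)))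
    (φ : ℝ → ℝ → ℝ → ℝ)
    (hφ : ∀ ζ κ r : ℝ, φ ζ κ r =
      if r ≤ ρ then Real.sin (a * r) / a
      else if r ≤ ρ + ζ then
        Real.sin (a * ρ) / a + (r - ρ) * Real.cos (a * ρ)
          + ∫ s in ρ..r, (∫ t in ρ..s, l ζ t)
      else if r ≤ ρ + ζ + κ then
        c * Real.sin ξ + c * (r - ρ - ζ) * Real.cos ξ
          + (1 - ψ ((r - (ρ + ζ)) / κ)) * (∫ s in ρ..r, (∫ t in ρ..s, l ζ t))
          + ψ ((r - (ρ + ζ)) / κ) * (∫ s in (ρ + ζ)..r, (∫ t in (ρ + ζ)..s, l ζ t))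
          + (1 - ψ ((r - (ρ + ζ)) / κ)) * (c * ζ * Real.cos ξ)
      else c * Real.sin (r - ρ - ζ + ξ)) :
    ∃ κ₀ : ℝ, 0 < κ₀ ∧ κ₀ < Real.pi / 2 - ξ ∧
      ∀ κ : ℝ, 0 < κ → κ < κ₀ →
        ∃ ζ₀ : ℝ, 0 < ζ₀ ∧
          ∀ ζ : ℝ, 0 < ζ → ζ < ζ₀ →
            ∀ r ∈ Set.Ioo (0 : ℝ) (ρ + ζ + Real.pi / 2 - ξ),
              deriv (deriv (φ ζ κ)) r ≤ -(1 - ξ) * φ ζ κ r ∧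
              (deriv (φ ζ κ) r) ^ 2 + (1 - ξ) * (φ ζ κ r) ^ 2 ≤ 1 := by
  obtain ⟨hc0, hc1⟩ := id hc
  obtain ⟨hx0, hx1⟩ := id hξ
  have hpi := Real.pi_gt_three
  have hpi4 := Real.pi_le_four
  have hsin : 0 < sin ξ := sin_pos_of_pos_of_lt_pi hx0 (by linarith)
  have hcos : 0 < cos ξ := cos_pos_of_mem_Ioo ⟨by linarith, by linarith⟩
  have hsc := sin_sq_add_cos_sq ξ
  have hcs : 0 < c * sin ξ := mul_pos hc0 hsin
  have hcc0 : 0 < c * cos ξ := mul_pos hc0 hcos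
  have hcc1 : c * cos ξ ≤ 1 := by nlinarith [cos_le_one ξ]
  have hrad : (c * sin ξ) ^ 2 ≤ 1 - c ^ 2 * cos ξ ^ 2 := by nlinarith
  have hsq : c * sin ξ ≤ Real.sqrt (1 - c ^ 2 * cos ξ ^ 2) := Real.le_sqrt_of_sq_le hrad
  have ha1 : 1 ≤ a := by rw [ha, le_div_iff₀ hcs]; linarith
  have ha0 : 0 < a := by linarith
  have haρ : a * ρ = arccos (c * cos ξ) := by rw [hρ]; field_simp
  have hsaρ : sin (a * ρ) = a * (c * sin ξ) := by
    rw [haρ, sin_arccos, ha, div_mul_cancel₀ _ hcs.ne', mul_pow]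
  have hcaρ : cos (a * ρ) = c * cos ξ := by
    rw [haρ, cos_arccos (by linarith) hcc1]
  have haρpi : a * ρ ≤ π := by rw [haρ]; exact arccos_le_pi _
  have hsa : sin (a * ρ) / a = c * sin ξ := by rw [hsaρ]; field_simp
  -- bounds on the cutoff
  have hψd : Differentiable ℝ ψ := hψ.differentiable (by simp)
  have hψ2 : ContDiff ℝ 1 (deriv ψ) := by
    have : ContDiff ℝ (1 + 1) ψ := by
      have h := contDiff_infty.1 hψ 2
      rw [one_add_one_eq_two]; exact_mod_cast h
    exact (contDiff_succ_iff_deriv.1 this).2.2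
  have hψ2d : Differentiable ℝ (deriv ψ) := hψ2.differentiable (by simp)
  obtain ⟨z0, z1, B, hB0, hB⟩ := aux_bd ψ hψ2.continuous 0 1
    (fun x hx => hψ0 x hx.le) (fun x hx => hψ1 x (le_of_lt hx))
  obtain ⟨y0, y1, B', hB0', hB'⟩ := aux_bd (deriv ψ) (hψ2.continuous_deriv (by simp)) 0 0 z0 z1
  refine ⟨(π / 2 - ξ) / 2, by linarith, by linarith, ?_⟩
  intro κ hκ0 hκ1
  obtain ⟨M, hM⟩ : ∃ M, M = a + 1 := ⟨_, rfl⟩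
  obtain ⟨A, hA⟩ : ∃ A, A = 1 + 3 * M := ⟨_, rfl⟩
  obtain ⟨K, hK⟩ : ∃ K, K = A * (1 + 2 * (B / κ) + B' / κ ^ 2) + a ^ 2 + 1 := ⟨_, rfl⟩
  have hB1 : 0 ≤ B / κ := by positivity
  have hB2 : 0 ≤ B' / κ ^ 2 := by positivity
  have hA0 : 0 < A := by linarith
  have hAB1 : 0 ≤ A * (B / κ) := by positivity
  have hAB2 : 0 ≤ A * (B' / κ ^ 2) := by positivity
  have hKe : K = A + 2 * (A * (B / κ)) + A * (B' / κ ^ 2) + a ^ 2 + 1 := by rw [hK]; ring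
  have ha2 : 0 ≤ a ^ 2 := by positivity
  have hK0 : 0 < K := by linarith
  obtain ⟨δ, hδ⟩ : ∃ δ, δ = min 1 (min (ξ * (c * sin ξ) / 2) ((1 - c ^ 2) / 6)) := ⟨_, rfl⟩
  have hδ0 : 0 < δ := by
    rw [hδ]
    refine lt_min one_pos (lt_min (by positivity) ?_)
    nlinarith
  have hδ1 : δ ≤ 1 := by rw [hδ]; exact min_le_left _ _
  have hδ2 : δ ≤ ξ * (c * sin ξ) / 2 := by
    rw [hδ]; exact (min_le_right _ _).trans (min_le_left _ _)
  have hδ3 : δ ≤ (1 - c ^ 2) / 6 := by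
    rw [hδ]; exact (min_le_right _ _).trans (min_le_right _ _)
  refine ⟨min 1 (δ / K), lt_min one_pos (by positivity), ?_⟩
  intro ζ hζ0 hζ r hr
  have hζ1 : ζ ≤ 1 := (hζ.trans_le (min_le_left _ _)).le
  have hKζ : K * ζ ≤ δ := by
    have := (hζ.trans_le (min_le_right _ _)).le
    rw [le_div_iff₀ hK0] at this; linarith
  have fin : ∀ u f f1 f2, sin ξ ≤ sin u → |f - c * sin u| ≤ K * ζ → |f1 - c * cos u| ≤ K * ζ →
      f2 ≤ - (c * sin u) + K * ζ → f2 ≤ -(1 - ξ) * f ∧ f1 ^ 2 + (1 - ξ) * f ^ 2 ≤ 1 := by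
    intro u f f1 f2 hu h0 h1 h2
    exact aux_final c ξ u δ f f1 f2 hc hξ hu hδ0.le hδ1 hδ2 hδ3 (h0.trans hKζ) (h1.trans hKζ)
      (by linarith)
  -- the function l
  have hlc : Continuous (l ζ) := by
    have : l ζ = fun t => -((1 - ψ ((t - ρ) / ζ)) * a * Real.sin (a * t)
        + ψ ((t - ρ) / ζ) * c * Real.sin (t - ρ - ζ + ξ)) := funext (hl ζ)
    rw [this]
    have := hψ.continuous
    fun_prop
  have hlM : ∀ t, |l ζ t| ≤ M := by
    intro t
    rw [hl, abs_neg]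
    obtain ⟨p0, p1⟩ := hψb ((t - ρ) / ζ)
    refine (abs_add_le _ _).trans ?_
    rw [abs_mul, abs_mul _ (sin (t - ρ - ζ + ξ)), abs_of_nonneg (mul_nonneg (by linarith) ha0.le),
      abs_of_nonneg (mul_nonneg p0 hc0.le)]
    have e1 : (1 - ψ ((t - ρ) / ζ)) * a * |sin (a * t)| ≤ 1 * a * 1 := by
      gcongr
      · linarith
      · exact abs_sin_le_one _
    have e2 : ψ ((t - ρ) / ζ) * c * |sin (t - ρ - ζ + ξ)| ≤ 1 * 1 * 1 := by
      gcongr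
      exact abs_sin_le_one _
    linarith
  have hl1 : ∀ t, t ≤ ρ → l ζ t = - (a * sin (a * t)) := by
    intro t ht
    rw [hl, hψ0 _ (div_nonpos_of_nonpos_of_nonneg (by linarith) hζ0.le)]; ring
  have hl3 : ∀ t, ρ + ζ ≤ t → l ζ t = - (c * sin (t - ρ - ζ + ξ)) := by
    intro t ht
    rw [hl, hψ1 _ (by rw [le_div_iff₀ hζ0]; linarith)]; ring
  obtain ⟨F, hF⟩ : ∃ F : ℝ → ℝ, F = fun s => ∫ t in ρ..s, l ζ t := ⟨_, rfl⟩
  obtain ⟨G, hG⟩ : ∃ G : ℝ → ℝ, G = fun r => ∫ s in ρ..r, (∫ t in ρ..s, l ζ t) := ⟨_, rfl⟩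
  obtain ⟨H, hH⟩ : ∃ H : ℝ → ℝ, H = fun r => ∫ s in (ρ+ζ)..r, (∫ t in (ρ+ζ)..s, l ζ t) := ⟨_, rfl⟩
  have hFd : ∀ r, HasDerivAt F (l ζ r) r := by rw [hF]; exact (aux_deriv _ hlc ρ).2.1
  have hGd : ∀ r, HasDerivAt G (F r) r := by rw [hG, hF]; exact (aux_deriv _ hlc ρ).2.2
  have hG1 : ∀ r ≤ ρ, F r = cos (a * r) - c * cos ξ ∧
      G r = sin (a * r) / a - c * sin ξ - (r - ρ) * (c * cos ξ) := by
    intro r hr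
    have := aux_int (l ζ) (fun x => cos (a * x)) (fun x => sin (a * x) / a) ρ r
      (aux_h1 a ha0.ne') (fun x => -(a * sin (a * x))) (aux_h2 a) (by fun_prop) (fun t ht => hl1 t (by
          rw [Set.uIcc_of_ge hr] at ht; exact ht.2))
    rw [hF, hG]
    rw [hcaρ, hsa] at this
    exact this
  have hH3 : ∀ r, ρ + ζ ≤ r → F r = F (ρ + ζ) + (c * cos (r - ρ - ζ + ξ) - c * cos ξ) ∧
      H r = c * sin (r - ρ - ζ + ξ) - c * sin ξ - (r - (ρ + ζ)) * (c * cos ξ) := by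
    intro r hr
    have := aux_int (l ζ) (fun x => c * cos (x - ρ - ζ + ξ)) (fun x => c * sin (x - ρ - ζ + ξ))
      (ρ + ζ) r
      (aux_h3 c ρ ζ ξ) (fun x => -(c * sin (x - ρ - ζ + ξ))) (aux_h4 c ρ ζ ξ) (by fun_prop) (fun t ht => hl3 t (by
          rw [Set.uIcc_of_le hr] at ht; exact ht.1))
    have e : ρ + ζ - ρ - ζ + ξ = ξ := by ring
    simp only [e] at this
    refine ⟨?_, by rw [hH]; exact this.2⟩
    rw [hF]
    simp only
    rw [(aux_D (l ζ) hlc ρ (ρ + ζ) r).1, this.1]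
  have hGH : ∀ r, G r = G (ρ + ζ) + (r - (ρ + ζ)) * F (ρ + ζ) + H r := by
    intro r
    rw [hG, hF, hH]
    exact (aux_D (l ζ) hlc ρ (ρ + ζ) r).2
  -- bounds
  have hFb : ∀ s, ρ ≤ s → s ≤ ρ + ζ → |F s| ≤ M * ζ := by
    intro s h1 h2
    rw [hF]
    have := norm_integral_le_of_norm_le_const (a := ρ) (b := s) (f := l ζ) (C := M)
      (fun x _ => hlM x)
    rw [Real.norm_eq_abs, abs_of_nonneg (by linarith : 0 ≤ s - ρ)] at this
    refine this.trans ?_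
    have : 0 ≤ M := by linarith
    gcongr; linarith
  have hGb : ∀ s, ρ ≤ s → s ≤ ρ + ζ → |G s| ≤ M * ζ := by
    intro s h1 h2
    have e : G s = ∫ t in ρ..s, F t := by rw [hG, hF]
    rw [e]
    have := norm_integral_le_of_norm_le_const (a := ρ) (b := s) (f := F) (C := M * ζ)
      (fun x hx => by
        rw [Set.uIoc_of_le h1] at hx
        exact hFb x hx.1.le (hx.2.trans h2))
    rw [Real.norm_eq_abs, abs_of_nonneg (by linarith : 0 ≤ s - ρ)] at this
    refine this.trans ?_
    have hM0 : 0 ≤ M := by linarith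
    have : 0 ≤ M * ζ := by positivity
    exact mul_le_of_le_one_right this (by linarith)
  -- global formula
  obtain ⟨E, hE⟩ : ∃ E, E = F (ρ + ζ) := ⟨_, rfl⟩
  obtain ⟨D0, hD0⟩ : ∃ D0, D0 = G (ρ + ζ) + c * ζ * cos ξ := ⟨_, rfl⟩
  have hφe : φ ζ κ = fun r => (c * sin ξ + (r - ρ) * (c * cos ξ) + G r)
      - ψ ((r - (ρ + ζ)) / κ) * (D0 + (r - (ρ + ζ)) * E) := by
    funext r
    rw [hφ]
    have n0 : r ≤ ρ + ζ → ψ ((r - (ρ + ζ)) / κ) = 0 := fun h =>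
      hψ0 _ (div_nonpos_of_nonpos_of_nonneg (by linarith) hκ0.le)
    split_ifs with h1 h2 h3
    · rw [n0 (by linarith), (hG1 r h1).2]; ring
    · rw [n0 h2, hsa, hcaρ, hG]; ring
    · have e1 : (∫ s in ρ..r, (∫ t in ρ..s, l ζ t)) = G r := by rw [hG]
      have e2 : (∫ s in (ρ+ζ)..r, (∫ t in (ρ+ζ)..s, l ζ t)) = H r := by rw [hH]
      rw [e1, e2, hGH r, hD0, hE]; ring
    · rw [hψ1 _ (by rw [le_div_iff₀ hκ0]; linarith), hGH r, (hH3 r (by linarith)).2, hD0, hE]; ring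
  have hin : ∀ r : ℝ, HasDerivAt (fun r : ℝ => (r - (ρ + ζ)) / κ) (1 / κ) r := fun r =>
    ((hasDerivAt_id r).sub_const _).div_const κ
  have hΨ1 : ∀ r, HasDerivAt (fun r => ψ ((r - (ρ + ζ)) / κ))
      (deriv ψ ((r - (ρ + ζ)) / κ) * (1 / κ)) r := fun r =>
    HasDerivAt.comp r (hψd _).hasDerivAt (hin r)
  have hΨ2 : ∀ r, HasDerivAt (fun r => deriv ψ ((r - (ρ + ζ)) / κ))
      (deriv (deriv ψ) ((r - (ρ + ζ)) / κ) * (1 / κ)) r := fun r =>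
    HasDerivAt.comp r (hψ2d _).hasDerivAt (hin r)
  have hDd : ∀ r, HasDerivAt (fun r => D0 + (r - (ρ + ζ)) * E) E r := fun r => by
    have := (((hasDerivAt_id r).sub_const (ρ + ζ)).mul_const E).const_add D0
    simpa using this
  have hLd : ∀ r, HasDerivAt (fun r => c * sin ξ + (r - ρ) * (c * cos ξ)) (c * cos ξ) r :=
      fun r => by
    have := (((hasDerivAt_id r).sub_const ρ).mul_const (c * cos ξ)).const_add (c * sin ξ)
    simpa using this
  have hd1 : deriv (φ ζ κ) = fun r => (c * cos ξ + F r)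
      - (deriv ψ ((r - (ρ + ζ)) / κ) * (1 / κ) * (D0 + (r - (ρ + ζ)) * E)
        + ψ ((r - (ρ + ζ)) / κ) * E) := by
    funext r
    rw [hφe]
    exact (((hLd r).add (hGd r)).sub ((hΨ1 r).mul (hDd r))).deriv
  have hd2 : deriv (deriv (φ ζ κ)) r = l ζ r
      - ((deriv (deriv ψ) ((r - (ρ + ζ)) / κ) * (1 / κ) * (1 / κ) * (D0 + (r - (ρ + ζ)) * E)
        + deriv ψ ((r - (ρ + ζ)) / κ) * (1 / κ) * E)
        + deriv ψ ((r - (ρ + ζ)) / κ) * (1 / κ) * E) := by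
    rw [hd1]
    exact (((hFd r).const_add (c * cos ξ)).sub
      ((((hΨ2 r).mul_const (1 / κ)).mul (hDd r)).add ((hΨ1 r).mul_const E))).deriv
  rw [hd2, hd1, hφe]
  simp only
  obtain ⟨hr0, hr1⟩ := hr
  have hMA : M * ζ ≤ K * ζ := by
    apply mul_le_mul_of_nonneg_right _ hζ0.le; linarith
  have hζM : ζ + M * ζ ≤ K * ζ := by
    have : (1 + M) * ζ ≤ K * ζ := by
      apply mul_le_mul_of_nonneg_right _ hζ0.le; linarith
    linarith
  rcases lt_or_ge r (ρ + ζ) with h2 | h2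
  · have hneg : (r - (ρ + ζ)) / κ < 0 := div_neg_of_neg_of_pos (by linarith) hκ0
    rw [y0 _ hneg, z0 _ hneg, hψ0 _ hneg.le]
    rcases le_or_gt r ρ with h1 | h1
    · rw [(hG1 r h1).1, (hG1 r h1).2, hl1 r h1]
      have hs0 : 0 ≤ sin (a * r) := sin_nonneg_of_nonneg_of_le_pi (by positivity)
        (le_trans (by gcongr) haρpi)
      have hsda : sin (a * r) / a ≤ sin (a * r) := div_le_self hs0 ha1
      have hsd0 : 0 ≤ sin (a * r) / a := by positivity
      have hsc' := sin_sq_add_cos_sq (a * r)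
      have e : c * sin ξ + (r - ρ) * (c * cos ξ)
        + (sin (a * r) / a - c * sin ξ - (r - ρ) * (c * cos ξ)) - 0 * (D0 + (r - (ρ + ζ)) * E)
        = sin (a * r) / a := by ring
      rw [e]
      constructor
      · have t1 : 1 * sin (a * r) ≤ a * sin (a * r) := mul_le_mul_of_nonneg_right ha1 hs0
        have t2 : 0 ≤ ξ * (sin (a * r) / a) := mul_nonneg hx0.le hsd0
        clear fin hG1 hH3 hGH hφ hl hFb hGb
        linarith only [t1, t2, hsda]
      · have : (sin (a * r) / a) ^ 2 ≤ sin (a * r) ^ 2 := by gcongr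
        have t2 : 0 ≤ ξ * (sin (a * r) / a) ^ 2 := mul_nonneg hx0.le (sq_nonneg _)
        have e' : c * cos ξ + (cos (a * r) - c * cos ξ) -
            (0 * (1 / κ) * (D0 + (r - (ρ + ζ)) * E) + 0 * E) = cos (a * r) := by ring
        rw [e']
        linarith only [t2, this, hsc']
    · apply fin ξ _ _ _ le_rfl
      · have := hGb r h1.le h2.le
        have e : c * sin ξ + (r - ρ) * (c * cos ξ) + G r - 0 * (D0 + (r - (ρ + ζ)) * E) - c * sin ξ
          = (r - ρ) * (c * cos ξ) + G r := by ring
        rw [e]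
        refine (abs_add_le _ _).trans ?_
        rw [abs_of_nonneg (mul_nonneg (by linarith) hcc0.le)]
        have : (r - ρ) * (c * cos ξ) ≤ ζ * 1 := by gcongr; linarith
        linarith
      · have := hFb r h1.le h2.le
        have e : c * cos ξ + F r - (0 * (1 / κ) * (D0 + (r - (ρ + ζ)) * E) + 0 * E) - c * cos ξ
          = F r := by ring
        rw [e]; linarith
      · obtain ⟨p0, p1⟩ := hψb ((r - ρ) / ζ)
        have hlip : ∀ x y : ℝ, sin y - |x - y| ≤ sin x := by
          intro x y
          have := (abs_le.1 (abs_sin_sub_sin_le x y)).1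
          linarith
        have l1 : c * sin ξ - a ^ 2 * ζ ≤ a * sin (a * r) := by
          have := hlip (a * r) (a * ρ)
          rw [← mul_sub, abs_mul, abs_of_pos ha0, abs_of_pos (by linarith : 0 < r - ρ), hsaρ] at this
          have h5 := mul_le_mul_of_nonneg_left this ha0.le
          have h6 : a ^ 2 * (r - ρ) ≤ a ^ 2 * ζ := by gcongr; linarith
          have h7 : 1 * (c * sin ξ) ≤ (a * a) * (c * sin ξ) := by
            exact mul_le_mul_of_nonneg_right (one_le_mul_of_one_le_of_one_le ha1 ha1) hcs.le
          linarith only [h5, h6, h7]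
        have l2 : c * sin ξ - ζ ≤ c * sin (r - ρ - ζ + ξ) := by
          have := hlip (r - ρ - ζ + ξ) ξ
          have e : |r - ρ - ζ + ξ - ξ| ≤ ζ := by rw [abs_le]; constructor <;> linarith
          have h5 : c * (sin ξ - ζ) ≤ c * sin (r - ρ - ζ + ξ) := by gcongr; linarith only [this, e]
          have h6 : c * ζ ≤ 1 * ζ := by gcongr
          linarith only [h5, h6]
        have haz : 0 ≤ a ^ 2 * ζ := by positivity
        have l3 := mul_le_mul_of_nonneg_left
          (by linarith : c * sin ξ - (a ^ 2 * ζ + ζ) ≤ a * sin (a * r))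
          (by linarith : 0 ≤ 1 - ψ ((r - ρ) / ζ))
        have l4 := mul_le_mul_of_nonneg_left
          (by linarith : c * sin ξ - (a ^ 2 * ζ + ζ) ≤ c * sin (r - ρ - ζ + ξ)) p0
        have l5 : (a ^ 2 + 1) * ζ ≤ K * ζ := by
          apply mul_le_mul_of_nonneg_right _ hζ0.le; linarith
        rw [hl]
        linarith
  · have hEb : |E| ≤ M * ζ := by rw [hE]; exact hFb _ (by linarith) le_rfl
    have hEA : |E| ≤ A * ζ := hEb.trans (by
      apply mul_le_mul_of_nonneg_right _ hζ0.le; linarith)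
    have hDb : |D0 + (r - (ρ + ζ)) * E| ≤ A * ζ := by
      have b1 : |G (ρ + ζ)| ≤ M * ζ := hGb _ (by linarith) le_rfl
      have b2 : |c * ζ * cos ξ| ≤ ζ := by
        rw [abs_of_nonneg (by positivity)]
        have h6 : (c * cos ξ) * ζ ≤ 1 * ζ := by gcongr
        linarith only [h6]
      have b3 : |(r - (ρ + ζ)) * E| ≤ 2 * (M * ζ) := by
        rw [abs_mul, abs_of_nonneg (by linarith)]
        gcongr; linarith
      have b4 := abs_add_le (G (ρ + ζ)) (c * ζ * cos ξ)
      have b5 := abs_add_le D0 ((r - (ρ + ζ)) * E)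
      rw [← hD0] at b4
      rw [hA]
      linarith
    obtain ⟨D, hD⟩ : ∃ D, D = D0 + (r - (ρ + ζ)) * E := ⟨_, rfl⟩
    rw [← hD] at hDb ⊢
    obtain ⟨p0, p1⟩ := hψb ((r - (ρ + ζ)) / κ)
    have hP1 : |deriv ψ ((r - (ρ + ζ)) / κ) * (1 / κ)| ≤ B / κ := by
      rw [abs_mul, abs_of_pos (by positivity : 0 < 1 / κ), mul_one_div]
      gcongr; exact hB _
    have hP2 : |deriv (deriv ψ) ((r - (ρ + ζ)) / κ) * (1 / κ) * (1 / κ)| ≤ B' / κ ^ 2 := by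
      rw [mul_assoc, abs_mul, abs_of_pos (by positivity : 0 < 1 / κ * (1 / κ))]
      have : B' / κ ^ 2 = B' * (1 / κ * (1 / κ)) := by field_simp
      rw [this]
      gcongr; exact hB' _
    obtain ⟨P0, hP0⟩ : ∃ P, P = ψ ((r - (ρ + ζ)) / κ) := ⟨_, rfl⟩
    obtain ⟨P1, hP1e⟩ : ∃ P, P = deriv ψ ((r - (ρ + ζ)) / κ) * (1 / κ) := ⟨_, rfl⟩
    obtain ⟨P2, hP2e⟩ : ∃ P, P = deriv (deriv ψ) ((r - (ρ + ζ)) / κ) * (1 / κ) * (1 / κ) :=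
      ⟨_, rfl⟩
    rw [← hP0] at p0 p1 ⊢
    rw [← hP1e] at hP1 ⊢
    rw [← hP2e] at hP2 ⊢
    have hAζ : 0 ≤ A * ζ := by positivity
    have q1 : |P1 * D| ≤ B / κ * (A * ζ) := by rw [abs_mul]; gcongr
    have q2 : |P1 * E| ≤ B / κ * (A * ζ) := by rw [abs_mul]; gcongr
    have q3 : |P2 * D| ≤ B' / κ ^ 2 * (A * ζ) := by rw [abs_mul]; gcongr
    have q4 : |(1 - P0) * D| ≤ 1 * (A * ζ) := by
      rw [abs_mul, abs_of_nonneg (by linarith : 0 ≤ 1 - P0)]; gcongr; linarith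
    have q5 : |(1 - P0) * E| ≤ 1 * (A * ζ) := by
      rw [abs_mul, abs_of_nonneg (by linarith : 0 ≤ 1 - P0)]; gcongr; linarith
    have hKζe : K * ζ = A * ζ + 2 * (B / κ * (A * ζ)) + B' / κ ^ 2 * (A * ζ) + a ^ 2 * ζ + ζ := by
      rw [hKe]; ring
    have w1 : 0 ≤ B / κ * (A * ζ) := by positivity
    have w2 : 0 ≤ B' / κ ^ 2 * (A * ζ) := by positivity
    have w3 : 0 ≤ a ^ 2 * ζ := by positivity
    apply fin (r - ρ - ζ + ξ)
    · apply sin_le_sin_of_le_of_le_pi_div_two <;> linarith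
    · have e : c * sin ξ + (r - ρ) * (c * cos ξ) + G r - P0 * D - c * sin (r - ρ - ζ + ξ)
          = (1 - P0) * D := by
        rw [hGH r, (hH3 r h2).2, hD, hD0, hE]; ring
      rw [e]; linarith
    · have e : c * cos ξ + F r - (P1 * D + P0 * E) - c * cos (r - ρ - ζ + ξ)
          = (1 - P0) * E - P1 * D := by
        rw [(hH3 r h2).1, hE]; ring
      rw [e]
      have := abs_sub ((1 - P0) * E) (P1 * D)
      linarith
    · rw [hl3 r h2]
      have := neg_abs_le (P1 * E)
      have := neg_abs_le (P2 * D)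
      linarith
end

section
/- Let n ≥ 2 be an integer and c ∈ (0,1], and let α := (−n + √(n² − 4(n−1)(1 − 1/c²)))/2, so that α ≥ 0 and α² + nα + (n−1)(1 − 1/c²) = 0. Then for every r ∈ (0, π): (i) the function u(r) := (sin r)^{1+α} satisfies u''(r) + (n−1)(cos r/sin r)·u'(r) − ((n−1)/(c²·sin²r))·u(r) = −(α + 1 + (n−1)/c²)·u(r); and (ii) the function v(r) := cos r satisfies v''(r) + (n−1)(cos r/sin r)·v'(r) = −n·v(r). -/
open Real

/-- Radial eigenfunction ODE identities on the football metric
`g_c = dr² + c² sin²r dθ²`: with `α = (−n + √(n² − 4(n−1)(1 − 1/c²)))/2` one has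
`α ≥ 0`, `α² + nα + (n−1)(1 − 1/c²) = 0`, and for all `r ∈ (0, π)` the functions
`u(r) = (sin r)^{1+α}` and `v(r) = cos r` satisfy the stated radial ODEs. -/
theorem stmt8 (n : ℕ) (hn : 2 ≤ n) (c : ℝ) (hc : c ∈ Set.Ioc (0 : ℝ) 1)
    (α : ℝ)
    (hα : α = (-(n : ℝ) + Real.sqrt ((n : ℝ) ^ 2 - 4 * ((n : ℝ) - 1) * (1 - 1 / c ^ 2))) / 2) :
    0 ≤ α ∧
    α ^ 2 + (n : ℝ) * α + ((n : ℝ) - 1) * (1 - 1 / c ^ 2) = 0 ∧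
    ∀ r ∈ Set.Ioo (0 : ℝ) Real.pi,
      (deriv (deriv (fun s : ℝ => Real.sin s ^ ((1 : ℝ) + α))) r
          + ((n : ℝ) - 1) * (Real.cos r / Real.sin r)
            * deriv (fun s : ℝ => Real.sin s ^ ((1 : ℝ) + α)) r
          - (((n : ℝ) - 1) / (c ^ 2 * Real.sin r ^ 2)) * Real.sin r ^ ((1 : ℝ) + α)
        = -(α + 1 + ((n : ℝ) - 1) / c ^ 2) * Real.sin r ^ ((1 : ℝ) + α)) ∧
      (deriv (deriv (fun s : ℝ => Real.cos s)) r
          + ((n : ℝ) - 1) * (Real.cos r / Real.sin r) * deriv (fun s : ℝ => Real.cos s) r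
        = -(n : ℝ) * Real.cos r) := by
  obtain ⟨hc0, hc1⟩ := hc
  have hn' : (2 : ℝ) ≤ n := by exact_mod_cast hn
  have hk : 1 - 1 / c ^ 2 ≤ 0 := by
    have : 1 ≤ 1 / c ^ 2 := by
      rw [le_div_iff₀ (by positivity)]
      nlinarith
    linarith
  have hm : ((n : ℝ) - 1) * (1 - 1 / c ^ 2) ≤ 0 :=
    mul_nonpos_of_nonneg_of_nonpos (by linarith) hk
  have hD : (n : ℝ) ^ 2 ≤ (n : ℝ) ^ 2 - 4 * ((n : ℝ) - 1) * (1 - 1 / c ^ 2) := by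
    linarith
  have h0 : 0 ≤ α := by
    have := Real.le_sqrt_of_sq_le hD
    rw [hα]
    linarith
  have hq : α ^ 2 + (n : ℝ) * α + ((n : ℝ) - 1) * (1 - 1 / c ^ 2) = 0 := by
    have h := Real.sq_sqrt ((sq_nonneg (n : ℝ)).trans hD)
    have h2 : Real.sqrt ((n : ℝ) ^ 2 - 4 * ((n : ℝ) - 1) * (1 - 1 / c ^ 2)) = 2 * α + n := by
      rw [hα]; ring
    rw [h2] at h
    linarith
  refine ⟨h0, hq, ?_⟩
  intro r hr
  have hs : 0 < Real.sin r := Real.sin_pos_of_mem_Ioo hr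
  have d1 : ∀ t : ℝ, deriv (fun s : ℝ => Real.sin s ^ ((1 : ℝ) + α)) t
      = Real.cos t * (1 + α) * Real.sin t ^ α := by
    intro t
    have h := (Real.hasDerivAt_sin t).rpow_const (p := 1 + α) (Or.inr (by linarith))
    rw [h.deriv, add_sub_cancel_left]
  have d2 : deriv (deriv (fun s : ℝ => Real.sin s ^ ((1 : ℝ) + α))) r
      = (-Real.sin r * (1 + α)) * Real.sin r ^ α
        + (Real.cos r * (1 + α)) * (Real.cos r * α * Real.sin r ^ (α - 1)) := by
    rw [funext d1]
    exact (((Real.hasDerivAt_cos r).mul_const (1 + α)).mul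
      ((Real.hasDerivAt_sin r).rpow_const (p := α) (Or.inl hs.ne'))).deriv
  have e1 : Real.sin r ^ α = Real.sin r ^ (α - 1) * Real.sin r := by
    rw [← Real.rpow_add_one hs.ne']; congr 1; ring
  have e2 : Real.sin r ^ (1 + α) = Real.sin r ^ (α - 1) * Real.sin r * Real.sin r := by
    rw [← e1, ← Real.rpow_add_one hs.ne']; congr 1; ring
  have hsc := Real.sin_sq_add_cos_sq r
  constructor
  · rw [d2, d1, e2, e1]
    generalize Real.sin r ^ (α - 1) = P
    have hcc : Real.cos r ^ 2 = 1 - Real.sin r ^ 2 := by linarith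
    have hc2 : ((n : ℝ) - 1) / c ^ 2 = α ^ 2 + n * α + (n - 1) := by
      linear_combination (-1 : ℝ) * hq
    have hx : ((n : ℝ) - 1) / (c ^ 2 * Real.sin r ^ 2) = (α ^ 2 + n * α + (n - 1)) / Real.sin r ^ 2 := by
      rw [← hc2, div_div]
    rw [hx, hc2]
    field_simp
    linear_combination (P * (1 + α) * (α + n - 1)) * hcc
  · have hd : deriv (fun s : ℝ => Real.cos s) = fun s => -Real.sin s := Real.deriv_cos'
    rw [hd]
    have : deriv (fun s : ℝ => -Real.sin s) r = -Real.cos r := (Real.hasDerivAt_sin r).neg.deriv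
    rw [this]
    field_simp
    ring
end

section
/- Let n ≥ 1 be an integer, A > 0, B > 0, α > 0, and let w ∈ ℝⁿ be a unit vector. Define G : (0, π/2) → ℝ^{n+1} by G(r) = (A·cos r, B·(sin r)^{1+α}·w). Then G(r) ≠ 0 for every r ∈ (0, π/2), the map r ↦ G(r)/‖G(r)‖ is differentiable on (0, π/2), and the norm of its derivative tends to 0 as r → 0⁺. -/
open Real Filter

/-- Degeneracy of the normalized eigenfunction map of the football metric:
for `G(r) = (A cos r, B (sin r)^{1+α} w)` with `w` a unit vector in `ℝⁿ`,
the map `G` is nowhere zero on `(0, π/2)`, the normalized map `G/‖G‖` is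
differentiable there, and the norm of its derivative tends to `0` as `r → 0⁺`. -/
theorem stmt9 (n : ℕ) (hn : 1 ≤ n) (A B α : ℝ) (hA : 0 < A) (hB : 0 < B) (hα : 0 < α)
    (w : EuclideanSpace ℝ (Fin n)) (hw : ‖w‖ = 1)
    (G : ℝ → EuclideanSpace ℝ (Fin (n + 1)))
    (hG0 : ∀ r : ℝ, G r 0 = A * Real.cos r)
    (hGs : ∀ (r : ℝ) (i : Fin n), G r i.succ = B * Real.sin r ^ ((1 : ℝ) + α) * w i) :
    (∀ r ∈ Set.Ioo (0 : ℝ) (Real.pi / 2), G r ≠ 0) ∧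
    (∀ r ∈ Set.Ioo (0 : ℝ) (Real.pi / 2),
      DifferentiableAt ℝ (fun s : ℝ => ‖G s‖⁻¹ • G s) r) ∧
    Filter.Tendsto (fun r : ℝ => ‖deriv (fun s : ℝ => ‖G s‖⁻¹ • G s) r‖)
      (nhdsWithin 0 (Set.Ioi 0)) (nhds 0) := by
  have hne : ∀ r : ℝ, 0 < Real.cos r → G r ≠ 0 := by
    intro r hr h
    have h1 := hG0 r
    rw [h] at h1
    have h2 : 0 < A * Real.cos r := mul_pos hA hr
    simp at h1
    rcases h1 with h1 | h1 <;> linarith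
  have hcd : ContDiff ℝ 1 G := by
    rw [contDiff_euclidean]
    intro i
    refine Fin.cases ?_ (fun j => ?_) i
    · simp only [hG0]
      fun_prop
    · simp only [hGs]
      have h : ContDiff ℝ 1 (fun x : ℝ => x ^ ((1 : ℝ) + α)) := by
        have := Real.contDiff_rpow_const_of_le (p := 1 + α) (n := 1) (by push_cast; linarith)
        exact_mod_cast this
      exact (contDiff_const.mul (h.comp Real.contDiff_sin)).mul contDiff_const
  have hN : ∀ x : EuclideanSpace ℝ (Fin (n + 1)), x ≠ 0 →
      ContDiffAt ℝ 1 (fun y : EuclideanSpace ℝ (Fin (n + 1)) => ‖y‖⁻¹ • y) x := by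
    intro x hx
    exact ((contDiffAt_norm ℝ hx).inv (norm_ne_zero_iff.2 hx)).smul contDiffAt_id
  have hF : ∀ r : ℝ, 0 < Real.cos r → ContDiffAt ℝ 1 (fun s : ℝ => ‖G s‖⁻¹ • G s) r := by
    intro r hr
    exact (hN _ (hne r hr)).comp r hcd.contDiffAt
  have hcos : ∀ r ∈ Set.Ioo (0 : ℝ) (Real.pi / 2), 0 < Real.cos r := fun r hr =>
    Real.cos_pos_of_mem_Ioo ⟨by linarith [hr.1, Real.pi_pos], hr.2⟩
  have hc0 : 0 < Real.cos 0 := by simp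
  have hG' : HasDerivAt G 0 0 := by
    suffices h : ∀ i, HasDerivAt (fun r => G r i) 0 0 by
      have hd : HasDerivAt G (deriv G 0) 0 :=
        ((hcd.differentiable (by simp)) 0).hasDerivAt
      have hz : deriv G 0 = 0 := by
        ext i
        have h2 := ((EuclideanSpace.proj (𝕜 := ℝ)
          i : EuclideanSpace ℝ (Fin (n + 1)) →L[ℝ] ℝ).hasFDerivAt (x := G 0)).comp_hasDerivAt 0 hd
        exact h2.unique (h i)
      rwa [hz] at hd
    intro i
    refine Fin.cases ?_ (fun j => ?_) i
    · simp only [hG0]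
      simpa using (Real.hasDerivAt_cos 0).const_mul A
    · simp only [hGs]
      have h := ((((Real.hasDerivAt_sin 0).rpow_const (p := 1 + α)
        (Or.inr (by linarith))).const_mul B).mul_const (w j))
      simpa [Real.zero_rpow hα.ne'] using h
  have hd0 : deriv (fun s : ℝ => ‖G s‖⁻¹ • G s) 0 = 0 := by
    have h := (((hN _ (hne 0 hc0)).differentiableAt (by simp)).hasFDerivAt).comp_hasDerivAt 0 hG'
    rw [map_zero] at h
    exact h.deriv
  refine ⟨fun r hr => hne r (hcos r hr),
    fun r hr => (hF r (hcos r hr)).differentiableAt (by simp), ?_⟩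
  have hc : ContinuousAt (deriv (fun s : ℝ => ‖G s‖⁻¹ • G s)) 0 := by
    have h := ((hF 0 hc0).fderiv_right (m := 0) (by simp)).continuousAt
    exact h.clm_apply continuousAt_const
  have := hc.norm.tendsto
  rw [hd0, norm_zero] at this
  exact this.mono_left nhdsWithin_le_nhds
end
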